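/- Let a_1,...,a_p, b_1,...,b_q ∈ R^n with positive weights α_i, β_j satisfying Σ_i α_i = Σ_j β_j, and let f(x) = Σ_i α_i ‖x − a_i‖ − Σ_j β_j ‖x − b_j‖. If w := Σ_i α_i a_i − Σ_j β_j b_j = 0, then f(x) → 0 as ‖x‖ → ∞. -/

import Mathlib

/-!
For fixed `a` and large `x`, `‖x - a‖ = ‖x‖ - ⟪x, a⟫ / ‖x‖ + O(‖x‖⁻¹)`. Summing against the weights,
the coefficient of `‖x‖` in the difference is `∑ α i - ∑ β j = 0`, and the middle terms add up to
`-⟪x, w⟫ / ‖x‖`, which vanishes when `w = 0`. Only the error `O(‖x‖⁻¹)` survives.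
-/

open Asymptotics Bornology Filter Topology
open scoped RealInnerProductSpace

section InnerProductSpace

variable {E ι κ : Type*} [NormedAddCommGroup E] [InnerProductSpace ℝ E]

theorem norm_mul_norm_sub_sub_norm_add_inner (x a : E) :
    ‖x‖ * (‖x - a‖ - ‖x‖) + ⟪x, a⟫ = (‖a‖ ^ 2 - (‖x - a‖ - ‖x‖) ^ 2) / 2 := by
  linear_combination (1 / 2 : ℝ) * norm_sub_sq_real x a

theorem abs_norm_mul_norm_sub_sub_norm_add_inner_le (x a : E) :
    |‖x‖ * (‖x - a‖ - ‖x‖) + ⟪x, a⟫| ≤ ‖a‖ ^ 2 / 2 := by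
  have habs : |‖x - a‖ - ‖x‖| ≤ ‖a‖ := by
    simpa using abs_norm_sub_norm_le (x - a) x
  have hsq : (‖x - a‖ - ‖x‖) ^ 2 ≤ ‖a‖ ^ 2 := sq_le_sq.2 (by rwa [abs_norm])
  rw [norm_mul_norm_sub_sub_norm_add_inner, abs_of_nonneg (by linarith)]
  linarith [sq_nonneg (‖x - a‖ - ‖x‖)]

theorem isBigO_norm_sub_expansion (a : E) :
    (fun x : E ↦ ‖x - a‖ - (‖x‖ - ⟪x, a⟫ / ‖x‖)) =O[cobounded E] fun x ↦ ‖x‖⁻¹ := by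
  refine .of_bound (‖a‖ ^ 2 / 2) ?_
  filter_upwards [eventually_ne_cobounded (0 : E)] with x hx
  have hx' : ‖x‖ ≠ 0 := norm_ne_zero_iff.2 hx
  calc
    ‖‖x - a‖ - (‖x‖ - ⟪x, a⟫ / ‖x‖)‖
        = ‖(‖x‖ * (‖x - a‖ - ‖x‖) + ⟪x, a⟫) * ‖x‖⁻¹‖ := by
      congr 1
      field_simp
      ring
    _ = |‖x‖ * (‖x - a‖ - ‖x‖) + ⟪x, a⟫| * ‖‖x‖⁻¹‖ := norm_mul _ _
    _ ≤ ‖a‖ ^ 2 / 2 * ‖‖x‖⁻¹‖ := by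
      gcongr
      exact abs_norm_mul_norm_sub_sub_norm_add_inner_le x a

theorem isBigO_sum_mul_norm_sub_expansion (s : Finset ι) (c : ι → ℝ) (a : ι → E) :
    (fun x : E ↦ ∑ i ∈ s, c i * ‖x - a i‖ -
      ((∑ i ∈ s, c i) * ‖x‖ - ⟪x, ∑ i ∈ s, c i • a i⟫ / ‖x‖)) =O[cobounded E]
        fun x ↦ ‖x‖⁻¹ := by
  have hsum := IsBigO.fun_sum fun i (_ : i ∈ s) ↦
    (isBigO_norm_sub_expansion (a i)).const_mul_left (c i)
  refine hsum.congr_left fun x ↦ ?_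
  simp only [inner_sum, real_inner_smul_right, Finset.sum_mul, Finset.sum_div, mul_sub,
    Finset.sum_sub_distrib, mul_div_assoc]

theorem isBigO_sum_mul_norm_sub_sub_sum_mul_norm_sub {s : Finset ι} {t : Finset κ}
    {a : ι → E} {b : κ → E} {α : ι → ℝ} {β : κ → ℝ} (hw : ∑ i ∈ s, α i = ∑ j ∈ t, β j)
    (hzero : ∑ i ∈ s, α i • a i - ∑ j ∈ t, β j • b j = 0) :
    (fun x : E ↦ ∑ i ∈ s, α i * ‖x - a i‖ - ∑ j ∈ t, β j * ‖x - b j‖) =O[cobounded E]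
      fun x ↦ ‖x‖⁻¹ := by
  have hα := isBigO_sum_mul_norm_sub_expansion s α a
  have hβ := isBigO_sum_mul_norm_sub_expansion t β b
  rw [hw, sub_eq_zero.1 hzero] at hα
  exact (hα.sub hβ).congr_left fun x ↦ sub_sub_sub_cancel_right _ _ _

theorem tendsto_zero_when_w_eq_zero_general {s : Finset ι} {t : Finset κ}
    {a : ι → E} {b : κ → E} {α : ι → ℝ} {β : κ → ℝ} (hw : ∑ i ∈ s, α i = ∑ j ∈ t, β j)
    (hzero : ∑ i ∈ s, α i • a i - ∑ j ∈ t, β j • b j = 0) :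
    Tendsto (fun x : E ↦ ∑ i ∈ s, α i * ‖x - a i‖ - ∑ j ∈ t, β j * ‖x - b j‖)
      (cobounded E) (𝓝 0) :=
  (isBigO_sum_mul_norm_sub_sub_sum_mul_norm_sub hw hzero).trans_tendsto
    (tendsto_inv_atTop_zero.comp tendsto_norm_cobounded_atTop)

end InnerProductSpace

theorem tendsto_zero_when_w_eq_zero (n p q : ℕ)
    (a : Fin p → EuclideanSpace ℝ (Fin n)) (b : Fin q → EuclideanSpace ℝ (Fin n))
    (α : Fin p → ℝ) (β : Fin q → ℝ)
    (hα : ∀ i, 0 < α i) (hβ : ∀ j, 0 < β j)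
    (hw : ∑ i, α i = ∑ j, β j)
    (f : EuclideanSpace ℝ (Fin n) → ℝ)
    (hf : ∀ x, f x = ∑ i, α i * ‖x - a i‖ - ∑ j, β j * ‖x - b j‖)
    (hzero : ∑ i, α i • a i - ∑ j, β j • b j = 0) :
    ∀ ε > 0, ∃ R : ℝ, ∀ x, R ≤ ‖x‖ → |f x| < ε := by
  simpa [hf] using (hasBasis_cobounded_norm.tendsto_iff Metric.nhds_basis_ball).1
    (tendsto_zero_when_w_eq_zero_general hw hzero)
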